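/- arXiv:2406.05890 — 2 statements merged into one kernel-verified Lean document; each statement's English description precedes it below -/
import Mathlib

section
/- Let p ≥ 3 be a prime and let (a_n)_{n≥0} be given by a_n = c_1·λ_1^n + c_2·λ_2^n with a_n ∈ ℚ_p for all n, where c_1, c_2, λ_1, λ_2 are nonzero elements of ℚ_p or of the unramified quadratic extension ℚ_p(√d). Assume |λ_1|_p = |λ_2|_p > 0 and that λ_2/λ_1 is not a root of unity. Let l be the order of λ_2/λ_1 modulo p and k = ν_p((λ_2/λ_1)^l − 1). Suppose −c_1/c_2 belongs to the closure of {(λ_2/λ_1)^n : n ∈ ℕ}, l ≥ 2, and s ∈ {0,1,…,l−1} satisfies (λ_2/λ_1)^s ≡ −c_1/c_2 (mod p^k). Then the Kepler set of (a_n) is the disjoint union K((a_n)) = ⨆_{i=0, i≠s}^{l−1} ( a_{i+1}/a_i + p^{ν_p(λ_2−λ_1)+k}·ℤ_p ) ⊔ {x ∈ ℚ_p : ν_p(x) < ν_p(λ_2) + 1 − k}. -/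
section UltrametricPowers

variable {p : ℕ} [Fact p.Prime] {K : Type*} [NormedField K]

theorem norm_eq_of_norm_sub_lt_norm_right [IsUltrametricDist K] {x y : K} (h : ‖x - y‖ < ‖y‖) :
    ‖x‖ = ‖y‖ := by
  have := IsUltrametricDist.norm_add_eq_max_of_norm_ne_norm h.ne
  rwa [sub_add_cancel, max_eq_right h.le] at this

theorem norm_sub_le_max_of_ultrametric [IsUltrametricDist K] (x y : K) :
    ‖x - y‖ ≤ max ‖x‖ ‖y‖ := by
  simpa [sub_eq_add_neg] using IsUltrametricDist.norm_add_le_max x (-y)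

theorem norm_pow_sub_one_sub_natCast_mul_le [IsUltrametricDist K] {u : K} (hu : ‖u‖ ≤ 1) (n : ℕ) :
    ‖u ^ n - 1 - n * (u - 1)‖ ≤ ‖u - 1‖ ^ 2 := by
  induction n with
  | zero => simp
  | succ n ih =>
    have h : u ^ (n + 1) - 1 - (n + 1 : ℕ) * (u - 1) =
        u * (u ^ n - 1 - n * (u - 1)) + n * (u - 1) ^ 2 := by push_cast; ring
    rw [h]
    refine (IsUltrametricDist.norm_add_le_max _ _).trans (max_le ?_ ?_)
    · rw [norm_mul]
      exact (mul_le_of_le_one_left (norm_nonneg _) hu).trans ih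
    · rw [norm_mul, norm_pow]
      exact mul_le_of_le_one_left (by positivity) (IsUltrametricDist.norm_natCast_le_one K n)

theorem norm_geom_sum_sub_le [IsUltrametricDist K] {u : K} (hu : ‖u‖ ≤ 1) (n : ℕ) :
    ‖(∑ i ∈ Finset.range n, u ^ i) - n‖ ≤
      max (‖((∑ i ∈ Finset.range n, i : ℕ) : K)‖ * ‖u - 1‖) (‖u - 1‖ ^ 2) := by
  have h : (∑ i ∈ Finset.range n, u ^ i) - n =
      ((∑ i ∈ Finset.range n, i : ℕ) : K) * (u - 1) +
        ∑ i ∈ Finset.range n, (u ^ i - 1 - i * (u - 1)) := by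
    simp [Finset.sum_sub_distrib, Finset.sum_mul]
  rw [h, ← norm_mul]
  exact (IsUltrametricDist.norm_add_le_max _ _).trans (max_le_max le_rfl
    (IsUltrametricDist.norm_sum_le_of_forall_le_of_nonneg (by positivity)
      fun i _ => norm_pow_sub_one_sub_natCast_mul_le hu i))

theorem norm_eq_one_of_norm_sub_one_le [IsUltrametricDist K] {u : K}
    (hu : ‖u - 1‖ ≤ (p : ℝ)⁻¹) : ‖u‖ = 1 := by
  have hpinv : (p : ℝ)⁻¹ < 1 :=
    inv_lt_one_of_one_lt₀ (by exact_mod_cast (Fact.out : p.Prime).one_lt)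
  simpa using norm_eq_of_norm_sub_lt_norm_right (y := (1 : K)) (by simpa using hu.trans_lt hpinv)

variable [NormedAlgebra ℚ_[p] K]

theorem norm_natCast_eq_padic (n : ℕ) : ‖(n : K)‖ = ‖(n : ℚ_[p])‖ := by
  rw [← norm_algebraMap' K (n : ℚ_[p]), map_natCast]

theorem norm_geom_sum_prime [IsUltrametricDist K] (hp : 3 ≤ p) {u : K} (hu1 : ‖u‖ ≤ 1)
    (hu : ‖u - 1‖ ≤ (p : ℝ)⁻¹) {q : ℕ} (hq : q.Prime) :
    ‖∑ i ∈ Finset.range q, u ^ i‖ = ‖(q : ℚ_[p])‖ := by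
  have hp0 : (0 : ℝ) < p := by positivity
  have hpinv : (p : ℝ)⁻¹ < 1 := inv_lt_one_of_one_lt₀ (by exact_mod_cast (by omega : 1 < p))
  rw [← norm_natCast_eq_padic (K := K)]
  apply norm_eq_of_norm_sub_lt_norm_right
  refine (norm_geom_sum_sub_le hu1 q).trans_lt ?_
  rw [norm_natCast_eq_padic (p := p) q, norm_natCast_eq_padic (p := p)]
  have hsq : ‖u - 1‖ ^ 2 ≤ (p : ℝ)⁻¹ * (p : ℝ)⁻¹ := by
    rw [sq]; exact mul_le_mul hu hu (norm_nonneg _) (by positivity)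
  have hlt : (p : ℝ)⁻¹ * (p : ℝ)⁻¹ < (p : ℝ)⁻¹ := mul_lt_of_lt_one_left (by positivity) hpinv
  by_cases hqp : q = p
  · subst hqp
    have hdvd : q ∣ ∑ i ∈ Finset.range q, i := by
      have h2 : q ∣ (∑ i ∈ Finset.range q, i) * 2 := by
        rw [Finset.sum_range_id_mul_two]; exact dvd_mul_right _ _
      exact (Nat.Coprime.dvd_of_dvd_mul_right
        ((Nat.coprime_primes hq Nat.prime_two).2 (by omega)) h2)
    obtain ⟨m, hm⟩ := hdvd
    rw [hm, Nat.cast_mul, norm_mul, Padic.norm_p]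
    refine (max_le ?_ hsq).trans_lt hlt
    refine mul_le_mul (mul_le_of_le_one_right (by positivity) ?_) hu (norm_nonneg _)
      (by positivity)
    exact IsUltrametricDist.norm_natCast_le_one ℚ_[q] m
  · rw [Padic.norm_natCast_eq_one_iff.2 ((Nat.coprime_primes Fact.out hq).2 (Ne.symm hqp))]
    refine max_lt ?_ (hsq.trans_lt (hlt.trans hpinv))
    exact (mul_le_of_le_one_left (norm_nonneg _)
      (IsUltrametricDist.norm_natCast_le_one ℚ_[p] _)).trans_lt (hu.trans_lt hpinv)

theorem norm_pow_sub_one_eq [IsUltrametricDist K] (hp : 3 ≤ p) (n : ℕ) {u : K}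
    (hu : ‖u - 1‖ ≤ (p : ℝ)⁻¹) : ‖u ^ n - 1‖ = ‖u - 1‖ * ‖(n : ℚ_[p])‖ := by
  induction n using Nat.recOnMul generalizing u with
  | zero => simp
  | one => simp
  | prime q hq =>
    rw [← geom_sum_mul, norm_mul, norm_geom_sum_prime hp
      (norm_eq_one_of_norm_sub_one_le hu).le hu hq, mul_comm]
  | mul a b iha ihb =>
    have ha : ‖u ^ a - 1‖ ≤ (p : ℝ)⁻¹ := by
      rw [iha hu]
      exact (mul_le_of_le_one_right (norm_nonneg _)
        (IsUltrametricDist.norm_natCast_le_one ℚ_[p] a)).trans hu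
    rw [pow_mul, ihb ha, iha hu, Nat.cast_mul, norm_mul, mul_assoc]

theorem norm_pow_sub_pow_eq [IsUltrametricDist K] (hp : 3 ≤ p) {u : K}
    (hu : ‖u - 1‖ ≤ (p : ℝ)⁻¹) (m n : ℕ) :
    ‖u ^ m - u ^ n‖ = ‖u - 1‖ * ‖(m : ℚ_[p]) - n‖ := by
  wlog h : n ≤ m generalizing m n
  · rw [norm_sub_rev, this n m (by omega), norm_sub_rev (m : ℚ_[p])]
  obtain ⟨c, rfl⟩ := Nat.exists_eq_add_of_le h
  have : u ^ (n + c) - u ^ n = u ^ n * (u ^ c - 1) := by ring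
  rw [this, norm_mul, norm_pow, norm_eq_one_of_norm_sub_one_le hu, one_pow, one_mul,
    norm_pow_sub_one_eq hp c hu]
  simp

/-- If `r ^ l ≡ 1` modulo `p` with `l` minimal, then powers of `r` whose exponents are incongruent
modulo `l` are incongruent modulo `p`. -/
theorem norm_pow_sub_pow_eq_one [IsUltrametricDist K] (hp : 3 ≤ p)
    (hval : ∀ x : K, x ≠ 0 → ∃ m : ℤ, ‖x‖ = (p : ℝ) ^ (-m)) {r : K} (hr : ‖r‖ = 1) {l : ℕ}
    (hl0 : 0 < l) (hl : ‖r ^ l - 1‖ ≤ (p : ℝ)⁻¹)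
    (hlmin : ∀ m : ℕ, 0 < m → ‖r ^ m - 1‖ ≤ (p : ℝ)⁻¹ → l ≤ m) {m n : ℕ} (hmn : m % l ≠ n % l) :
    ‖r ^ m - r ^ n‖ = 1 := by
  wlog h : n ≤ m generalizing m n
  · rw [norm_sub_rev, this hmn.symm (by omega)]
  obtain ⟨c, rfl⟩ := Nat.exists_eq_add_of_le h
  have hc : 0 < c % l := by
    refine Nat.pos_of_ne_zero fun h0 => hmn ?_
    rw [Nat.add_mod, h0, add_zero, Nat.mod_mod]
  have hpR : (1 : ℝ) < p := by exact_mod_cast (by omega : 1 < p)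
  have e : r ^ (n + c) - r ^ n = r ^ n * (r ^ c - 1) := by ring
  rw [e, norm_mul, norm_pow, hr, one_pow, one_mul]
  have hle : ‖r ^ c - 1‖ ≤ 1 := by
    simpa [hr] using norm_sub_le_max_of_ultrametric (r ^ c) 1
  have hgt : (p : ℝ)⁻¹ < ‖r ^ c - 1‖ := by
    by_contra! hcon
    have h1 : ‖(r ^ l) ^ (c / l) - 1‖ ≤ (p : ℝ)⁻¹ := by
      rw [norm_pow_sub_one_eq hp _ hl]
      exact (mul_le_of_le_one_right (norm_nonneg _)
        (IsUltrametricDist.norm_natCast_le_one ℚ_[p] _)).trans hl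
    have h2 : (r ^ l) ^ (c / l) * (r ^ (c % l) - 1) =
        (r ^ c - 1) - ((r ^ l) ^ (c / l) - 1) := by
      rw [mul_sub, ← pow_mul, ← pow_add, Nat.div_add_mod]; ring
    have h3 : ‖r ^ (c % l) - 1‖ ≤ (p : ℝ)⁻¹ := by
      have := (norm_sub_le_max_of_ultrametric _ _).trans (max_le hcon h1)
      rwa [← h2, norm_mul, norm_pow, norm_pow, hr, one_pow, one_pow, one_mul] at this
    exact absurd (hlmin _ hc h3) (not_le.2 (Nat.mod_lt _ hl0))
  obtain ⟨j, hj⟩ := hval (r ^ c - 1) (norm_pos_iff.1 ((by positivity : (0 : ℝ) < _).trans hgt))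
  rw [hj] at hle hgt ⊢
  rw [← zpow_neg_one, zpow_lt_zpow_iff_right₀ hpR] at hgt
  rw [← zpow_zero (p : ℝ), zpow_le_zpow_iff_right₀ hpR] at hle
  rw [show -j = 0 by omega, zpow_zero]

end UltrametricPowers

theorem PadicInt.denseRange_of_isometric {p : ℕ} [Fact p.Prime] {f : ℕ → ℤ_[p]}
    (hf : ∀ m n, ‖f m - f n‖ = ‖(m : ℚ_[p]) - n‖) : DenseRange f := by
  rw [Metric.denseRange_iff]
  intro x ε hε
  obtain ⟨N, hN⟩ := PadicInt.exists_pow_neg_lt p hε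
  have key : ∀ y z : ℤ_[p], PadicInt.toZModPow N y = PadicInt.toZModPow N z ↔
      ‖y - z‖ ≤ (p : ℝ) ^ (-N : ℤ) := fun y z => by
    rw [PadicInt.norm_le_pow_iff_mem_span_pow, ← PadicInt.ker_toZModPow, RingHom.mem_ker,
      map_sub, sub_eq_zero]
  have hinj : Function.Injective fun m : Fin (p ^ N) => PadicInt.toZModPow N (f m) := by
    intro m n hmn
    have h := (key _ _).1 hmn
    rw [hf] at h
    have h' : ‖(((m : ℕ) - (n : ℕ) : ℤ) : ℚ_[p])‖ ≤ (p : ℝ) ^ (-N : ℤ) := by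
      push_cast; exact h
    rw [Padic.norm_int_le_pow_iff_dvd] at h'
    have h2 := (Nat.modEq_iff_dvd (n := p ^ N)).2 (by exact_mod_cast h')
    exact Fin.ext (Nat.ModEq.eq_of_lt_of_lt h2 n.2 m.2).symm
  obtain ⟨m, hm⟩ := (hinj.bijective_of_nat_card_le (by simp)).2 (PadicInt.toZModPow N x)
  refine ⟨m, ?_⟩
  rw [dist_eq_norm]
  exact ((key _ _).1 hm.symm).trans_lt hN

theorem Padic.closedBall_subset_closure_range {p : ℕ} [Fact p.Prime] {f : ℕ → ℚ_[p]} {N : ℤ}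
    (hf : ∀ m n, ‖f m - f n‖ = (p : ℝ) ^ (-N) * ‖(m : ℚ_[p]) - n‖) {x : ℚ_[p]}
    (hx : ‖x - f 0‖ ≤ (p : ℝ) ^ (-N)) : x ∈ closure (Set.range f) := by
  have hp : (p : ℚ_[p]) ≠ 0 := by exact_mod_cast (Fact.out : p.Prime).ne_zero
  have hpR : (0 : ℝ) < p := by exact_mod_cast (Fact.out : p.Prime).pos
  have hscale : ∀ y : ℚ_[p], ‖y / (p : ℚ_[p]) ^ N‖ = ‖y‖ / (p : ℝ) ^ (-N) := fun y => by
    rw [norm_div, Padic.norm_p_zpow]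
  have hpN : (0 : ℝ) < (p : ℝ) ^ (-N) := by positivity
  have hball : ∀ m, ‖(f m - f 0) / (p : ℚ_[p]) ^ N‖ ≤ 1 := fun m => by
    rw [hscale, hf, mul_div_cancel_left₀ _ hpN.ne']
    simpa using IsUltrametricDist.norm_natCast_le_one ℚ_[p] m
  let g : ℕ → ℤ_[p] := fun m => ⟨_, hball m⟩
  let φ : ℤ_[p] → ℚ_[p] := fun y => f 0 + (p : ℚ_[p]) ^ N * y
  have hφ : Continuous φ := by fun_prop
  have hg : DenseRange g := PadicInt.denseRange_of_isometric fun m n => by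
    rw [PadicInt.norm_def, PadicInt.coe_sub, ← sub_div, hscale, sub_sub_sub_cancel_right, hf,
      mul_div_cancel_left₀ _ hpN.ne']
  have hφg : ∀ m, φ (g m) = f m := fun m => by
    simp only [φ, g]; field_simp; ring
  have hx1 : ‖(x - f 0) / (p : ℚ_[p]) ^ N‖ ≤ 1 := by rw [hscale]; exact (div_le_one hpN).2 hx
  have hxφ : φ ⟨_, hx1⟩ = x := by simp only [φ]; field_simp; ring
  rw [← hxφ]
  have := image_closure_subset_closure_image hφ ⟨_, hg ⟨_, hx1⟩, rfl⟩
  rw [← Set.range_comp] at this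
  rwa [show φ ∘ g = f from funext hφg] at this


/-- The Kepler set of a sequence `a` in `ℚ_[p]`: the closure of the set of
consecutive ratios `a (n+1) / a n` over indices `n` with `a n ≠ 0`. -/
def keplerSet (p : ℕ) [Fact p.Prime] (a : ℕ → ℚ_[p]) : Set ℚ_[p] :=
  closure {x : ℚ_[p] | ∃ n : ℕ, a n ≠ 0 ∧ x = a (n + 1) / a n}

theorem stmt_3 (p : ℕ) [Fact p.Prime] (hp : 3 ≤ p)
    -- `K` is `ℚ_p` or the unramified quadratic extension `ℚ_p(√d)` of `ℚ_p`
    (K : Type) [NormedField K] [Algebra ℚ_[p] K]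
    (hiso : ∀ x : ℚ_[p], ‖algebraMap ℚ_[p] K x‖ = ‖x‖)
    (hna : ∀ x y : K, ‖x + y‖ ≤ max ‖x‖ ‖y‖)
    (hval : ∀ x : K, x ≠ 0 → ∃ m : ℤ, ‖x‖ = (p : ℝ) ^ (-m))
    (d : ℚ_[p]) (hd : ‖d‖ = 1) (hdns : ¬ ∃ y : ℚ_[p], y ^ 2 = d)
    (sq : K) (hsq : sq ^ 2 = algebraMap ℚ_[p] K d)
    (hspan : ∀ x : K, ∃ u v : ℚ_[p], x = algebraMap ℚ_[p] K u + algebraMap ℚ_[p] K v * sq)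
    -- the sequence `a n = c₁ λ₁ ^ n + c₂ λ₂ ^ n`, with values in `ℚ_p`
    (c₁ c₂ lam₁ lam₂ : K) (hc₁ : c₁ ≠ 0) (hc₂ : c₂ ≠ 0) (hlam₁ : lam₁ ≠ 0) (hlam₂ : lam₂ ≠ 0)
    (hnorm : ‖lam₁‖ = ‖lam₂‖) (hpos : 0 < ‖lam₂‖)
    (hru : ∀ n : ℕ, 0 < n → (lam₂ / lam₁) ^ n ≠ 1)
    (a : ℕ → ℚ_[p])
    (ha : ∀ n : ℕ, algebraMap ℚ_[p] K (a n) = c₁ * lam₁ ^ n + c₂ * lam₂ ^ n)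
    -- `l` is the order of `λ₂/λ₁` modulo `p`, with `l ≥ 2`
    (l : ℕ) (hl0 : 0 < l) (hl : ‖(lam₂ / lam₁) ^ l - 1‖ ≤ (p : ℝ)⁻¹)
    (hlmin : ∀ m : ℕ, 0 < m → ‖(lam₂ / lam₁) ^ m - 1‖ ≤ (p : ℝ)⁻¹ → l ≤ m)
    (hl2 : 2 ≤ l)
    -- `k = ν_p((λ₂/λ₁) ^ l - 1)`
    (k : ℕ) (hk : ‖(lam₂ / lam₁) ^ l - 1‖ = (p : ℝ) ^ (-(k : ℤ)))
    -- `-c₁/c₂` belongs to the closure of `{(λ₂/λ₁) ^ n}`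
    (hcl : -(c₁ / c₂) ∈ closure {z : K | ∃ n : ℕ, z = (lam₂ / lam₁) ^ n})
    -- `σ ∈ {0, …, l-1}` satisfies `(λ₂/λ₁) ^ σ ≡ -c₁/c₂ (mod p ^ k)`
    (σ : ℕ) (hσl : σ < l)
    (hσ : ‖(lam₂ / lam₁) ^ σ - -(c₁ / c₂)‖ ≤ (p : ℝ) ^ (-(k : ℤ)))
    -- `vΔ = ν_p(λ₂ - λ₁)` and `v₂ = ν_p(λ₂)`
    (vΔ v₂ : ℤ) (hvΔ : ‖lam₂ - lam₁‖ = (p : ℝ) ^ (-vΔ)) (hv₂ : ‖lam₂‖ = (p : ℝ) ^ (-v₂)) :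
    (keplerSet p a =
      (⋃ i ∈ Finset.range l \ {σ},
        {x : ℚ_[p] | ‖x - a (i + 1) / a i‖ ≤ (p : ℝ) ^ (-(vΔ + (k : ℤ)))}) ∪
      {x : ℚ_[p] | (p : ℝ) ^ (-(v₂ + 1 - (k : ℤ))) < ‖x‖}) ∧
    (↑(Finset.range l \ {σ}) : Set ℕ).PairwiseDisjoint
      (fun i => {x : ℚ_[p] | ‖x - a (i + 1) / a i‖ ≤ (p : ℝ) ^ (-(vΔ + (k : ℤ)))}) ∧
    (∀ i ∈ Finset.range l \ {σ},
      Disjoint {x : ℚ_[p] | ‖x - a (i + 1) / a i‖ ≤ (p : ℝ) ^ (-(vΔ + (k : ℤ)))}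
        {x : ℚ_[p] | (p : ℝ) ^ (-(v₂ + 1 - (k : ℤ))) < ‖x‖}) := by
  let inst : NormedAlgebra ℚ_[p] K :=
    { (inferInstance : Algebra ℚ_[p] K) with
      norm_smul_le := fun c x => by rw [Algebra.smul_def, norm_mul, hiso] }
  have : IsUltrametricDist K :=
    IsUltrametricDist.isUltrametricDist_of_forall_norm_add_le_max_norm hna
  have hpR : (1 : ℝ) < p := by exact_mod_cast (by omega : 1 < p)
  have hp0 : (0 : ℝ) < p := by positivity
  obtain ⟨r, hr⟩ : ∃ r, r = lam₂ / lam₁ := ⟨_, rfl⟩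
  obtain ⟨t, ht⟩ : ∃ t, t = -(c₁ / c₂) := ⟨_, rfl⟩
  rw [← hr] at hl hk hσ
  simp only [← hr] at hlmin
  rw [← ht] at hσ
  have hr1 : ‖r‖ = 1 := by
    rw [hr, norm_div, hnorm, div_self hpos.ne']
  have hkp : (p : ℝ) ^ (-(k : ℤ)) ≤ (p : ℝ)⁻¹ := hk ▸ hl
  have hk1 : (1 : ℤ) ≤ k := by
    rw [← zpow_neg_one, zpow_le_zpow_iff_right₀ hpR] at hkp
    omega
  have hklt : (p : ℝ) ^ (-(k : ℤ)) < 1 := hkp.trans_lt (inv_lt_one_of_one_lt₀ hpR)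
  have hne : ∀ {m n : ℕ}, m % l ≠ n % l → ‖r ^ m - r ^ n‖ = 1 :=
    norm_pow_sub_pow_eq_one hp hval hr1 hl0 hl hlmin
  have heq : ∀ i m n : ℕ, ‖r ^ (i + l * m) - r ^ (i + l * n)‖ =
      (p : ℝ) ^ (-(k : ℤ)) * ‖(m : ℚ_[p]) - n‖ := fun i m n => by
    rw [pow_add, pow_add, ← mul_sub, norm_mul, norm_pow, hr1, one_pow, one_mul, pow_mul, pow_mul,
      norm_pow_sub_pow_eq hp hl, hk]
  have hmod : ∀ n : ℕ, ‖r ^ n - r ^ (n % l)‖ ≤ (p : ℝ) ^ (-(k : ℤ)) := fun n => by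
    have h := heq (n % l) (n / l) 0
    rw [Nat.mod_add_div, mul_zero, add_zero] at h
    rw [h]
    refine mul_le_of_le_one_right (by positivity) ?_
    simpa using IsUltrametricDist.norm_natCast_le_one ℚ_[p] (n / l)
  have hrt : ∀ n : ℕ, n % l = σ → ‖r ^ n - t‖ ≤ (p : ℝ) ^ (-(k : ℤ)) := fun n hn => by
    rw [← sub_add_sub_cancel _ (r ^ σ) t]
    exact (IsUltrametricDist.norm_add_le_max _ _).trans (max_le (hn ▸ hmod n) hσ)
  have hrt' : ∀ n : ℕ, n % l ≠ σ → ‖r ^ n - t‖ = 1 := fun n hn => by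
    have h1 : ‖r ^ n - r ^ σ‖ = 1 := hne (by rwa [Nat.mod_eq_of_lt hσl])
    rw [← h1]
    refine norm_eq_of_norm_sub_lt_norm_right ?_
    rw [h1, sub_sub_sub_cancel_left]
    exact hσ.trans_lt hklt
  have hnext : ∀ n : ℕ, n % l = σ → (n + 1) % l ≠ σ := fun n hn h => by
    have h1 : (n + 1) ≡ n + 0 [MOD l] := h.trans hn.symm
    have h2 := Nat.ModEq.add_left_cancel' n h1
    rw [Nat.ModEq, Nat.mod_eq_of_lt (by omega), Nat.zero_mod] at h2
    omega
  have ht1 : ‖t‖ = 1 := by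
    have h1 : ‖r ^ σ‖ = 1 := by rw [norm_pow, hr1, one_pow]
    rw [← h1]
    refine norm_eq_of_norm_sub_lt_norm_right ?_
    rw [norm_sub_rev, h1]
    exact hσ.trans_lt hklt
  have hrsub : ‖r - 1‖ = 1 := by
    simpa using hne (m := 1) (n := 0) (by rw [Nat.mod_eq_of_lt (by omega), Nat.zero_mod]; omega)
  have hlam : ‖lam₁‖ = (p : ℝ) ^ (-v₂) := hnorm.trans hv₂
  have hlam2 : lam₂ = lam₁ * r := by rw [hr]; field_simp
  have hvv : vΔ = v₂ := by
    have : (p : ℝ) ^ (-vΔ) = (p : ℝ) ^ (-v₂) := by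
      rw [← hvΔ, hlam2, ← mul_sub_one, norm_mul, hrsub, mul_one, hlam]
    have := zpow_right_injective₀ hp0 hpR.ne' this
    omega
  subst hvv
  have haK : ∀ n, algebraMap ℚ_[p] K (a n) = c₂ * lam₁ ^ n * (r ^ n - t) := fun n => by
    rw [ha, ht, hlam2]; field_simp; ring
  have ha0 : ∀ n, a n ≠ 0 ↔ r ^ n - t ≠ 0 := fun n => by
    rw [← (map_ne_zero_iff (algebraMap ℚ_[p] K) (algebraMap ℚ_[p] K).injective), haK]
    simp [hc₂, hlam₁]
  have hrt0 : ∀ n : ℕ, n % l ≠ σ → r ^ n - t ≠ 0 := fun n hn =>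
    norm_pos_iff.1 (by rw [hrt' n hn]; exact one_pos)
  have hx : ∀ n, algebraMap ℚ_[p] K (a (n + 1) / a n) =
      lam₁ * ((r ^ (n + 1) - t) / (r ^ n - t)) := fun n => by
    rw [map_div₀, haK, haK,
      show c₂ * lam₁ ^ (n + 1) * (r ^ (n + 1) - t) =
        c₂ * lam₁ ^ n * (lam₁ * (r ^ (n + 1) - t)) by ring,
      mul_div_mul_left _ _ (mul_ne_zero hc₂ (pow_ne_zero _ hlam₁)), mul_div_assoc]
  have hdist : ∀ m n : ℕ, m % l ≠ σ → n % l ≠ σ →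
      ‖a (m + 1) / a m - a (n + 1) / a n‖ = (p : ℝ) ^ (-vΔ) * ‖r ^ m - r ^ n‖ :=
    fun m n hm hn => by
      have h1 := hrt0 m hm
      have h2 := hrt0 n hn
      have h3 : lam₁ * ((r ^ (m + 1) - t) / (r ^ m - t)) -
          lam₁ * ((r ^ (n + 1) - t) / (r ^ n - t)) =
          lam₁ * (t * (r - 1) * (r ^ n - r ^ m) / ((r ^ m - t) * (r ^ n - t))) := by
        rw [← mul_sub, div_sub_div _ _ h1 h2]; ring
      rw [← hiso, map_sub, hx, hx, h3]
      simp only [norm_mul, norm_div, hrt' m hm, hrt' n hn, ht1, hrsub, hlam]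
      rw [norm_sub_rev]; ring
  have hinvdist : ∀ m n : ℕ, m % l = σ → n % l = σ →
      ‖a m / a (m + 1) - a n / a (n + 1)‖ = (p : ℝ) ^ vΔ * ‖r ^ m - r ^ n‖ :=
    fun m n hm hn => by
      have h1 := hrt0 _ (hnext m hm)
      have h2 := hrt0 _ (hnext n hn)
      have h3 : lam₁⁻¹ * ((r ^ m - t) / (r ^ (m + 1) - t)) -
          lam₁⁻¹ * ((r ^ n - t) / (r ^ (n + 1) - t)) =
          lam₁⁻¹ * (t * (r - 1) * (r ^ m - r ^ n) /
            ((r ^ (m + 1) - t) * (r ^ (n + 1) - t))) := by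
        rw [← mul_sub, div_sub_div _ _ h1 h2]; ring
      rw [← hiso, map_sub, ← inv_div (a (m + 1)), ← inv_div (a (n + 1)), map_inv₀, map_inv₀, hx, hx,
        mul_inv, mul_inv, inv_div, inv_div, h3]
      simp only [norm_mul, norm_div, norm_inv, hrt' _ (hnext m hm), hrt' _ (hnext n hn), ht1,
        hrsub, hlam, zpow_neg, inv_inv]
      ring
  have hxle : ∀ n : ℕ, n % l ≠ σ → ‖a (n + 1) / a n‖ ≤ (p : ℝ) ^ (-vΔ) := fun n hn => by
    rw [← hiso, hx, norm_mul, norm_div, hrt' n hn, div_one, hlam]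
    refine mul_le_of_le_one_right (by positivity) ?_
    by_cases h : (n + 1) % l = σ
    · exact (hrt _ h).trans hklt.le
    · exact (hrt' _ h).le
  have hyle : ∀ n : ℕ, n % l = σ → ‖a n / a (n + 1)‖ ≤ (p : ℝ) ^ (vΔ - k) := fun n hn => by
    rw [← inv_div, ← hiso, map_inv₀, hx, mul_inv, inv_div, norm_mul, norm_div,
      hrt' _ (hnext n hn), div_one, norm_inv, hlam, zpow_neg, inv_inv, sub_eq_add_neg vΔ,
      zpow_add₀ hp0.ne']
    exact mul_le_mul_of_nonneg_left (hrt n hn) (by positivity)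
  have hout : ∀ y : ℚ_[p], y ≠ 0 →
      (‖y‖ ≤ (p : ℝ) ^ (vΔ - k) ↔ (p : ℝ) ^ (-(vΔ + 1 - (k : ℤ))) < ‖y⁻¹‖) := fun y hy => by
    rw [Padic.norm_le_pow_iff_norm_lt_pow_add_one, zpow_neg, norm_inv,
      inv_lt_inv₀ (by positivity) (norm_pos_iff.2 hy), show vΔ - (k : ℤ) + 1 = vΔ + 1 - k by ring]
  have hmodlt : ∀ i ∈ Finset.range l \ {σ}, i < l ∧ i % l ≠ σ := fun i hi => by
    simp only [Finset.mem_sdiff, Finset.mem_range, Finset.mem_singleton] at hi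
    exact ⟨hi.1, by rw [Nat.mod_eq_of_lt hi.1]; exact hi.2⟩
  have hpow : (p : ℝ) ^ (-(vΔ + (k : ℤ))) = (p : ℝ) ^ (-vΔ) * (p : ℝ) ^ (-(k : ℤ)) := by
    rw [← zpow_add₀ hp0.ne', neg_add]
  have hpowlt : (p : ℝ) ^ (-(vΔ + (k : ℤ))) < (p : ℝ) ^ (-vΔ) := by
    rw [hpow]; exact mul_lt_of_lt_one_right (by positivity) hklt
  refine ⟨Set.Subset.antisymm (closure_minimal ?_ ?_) (Set.union_subset ?_ ?_), ?_, ?_⟩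
  · rintro _ ⟨n, hn, rfl⟩
    by_cases h : n % l = σ
    · right
      have h1 := (ha0 _).2 (hrt0 _ (hnext n h))
      have := (hout _ (div_ne_zero hn h1)).1 (hyle n h)
      rwa [inv_div] at this
    · left
      refine Set.mem_biUnion (x := n % l) ?_ ?_
      · simp [h, Nat.mod_lt _ hl0]
      · rw [Set.mem_ofPred_eq, hdist _ _ h (by rwa [Nat.mod_mod]), hpow]
        exact mul_le_mul_of_nonneg_left (hmod n) (by positivity)
  · refine IsClosed.union (isClosed_biUnion_finset fun i _ => ?_) ?_
    · exact isClosed_le (by fun_prop) continuous_const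
    · have h := (IsUltrametricDist.isOpen_closedBall (0 : ℚ_[p])
        (r := (p : ℝ) ^ (-(vΔ + 1 - (k : ℤ)))) (by positivity)).isClosed_compl
      convert h using 1
      ext x; simp
  · refine Set.iUnion₂_subset fun i hi x hxi => ?_
    obtain ⟨_, hiσ⟩ := hmodlt i hi
    have him : ∀ m, (i + l * m) % l ≠ σ := fun m => by rwa [Nat.add_mul_mod_self_left]
    refine closure_mono ?_ (Padic.closedBall_subset_closure_range (N := vΔ + k)
      (f := fun m => a (i + l * m + 1) / a (i + l * m)) (fun m n => ?_) hxi)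
    · rintro _ ⟨m, rfl⟩
      exact ⟨i + l * m, (ha0 _).2 (hrt0 _ (him m)), rfl⟩
    · rw [hdist _ _ (him m) (him n), heq, hpow, mul_assoc]
  · intro x hxo
    have hx0 : x ≠ 0 := norm_pos_iff.1 ((by positivity : (0 : ℝ) < _).trans hxo)
    have hσm : ∀ m, (σ + l * m) % l = σ := fun m => by
      rw [Nat.add_mul_mod_self_left, Nat.mod_eq_of_lt hσl]
    have hxi : ‖x⁻¹‖ ≤ (p : ℝ) ^ (vΔ - k) := (hout _ (inv_ne_zero hx0)).2 (by rwa [inv_inv])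
    have hcl := Padic.closedBall_subset_closure_range (N := k - vΔ) (x := x⁻¹)
      (f := fun m => a (σ + l * m) / a (σ + l * m + 1)) (fun m n => by
        rw [hinvdist _ _ (hσm m) (hσm n), heq, ← mul_assoc, ← zpow_add₀ hp0.ne']
        congr 2; ring)
      (by
        rw [neg_sub]
        exact (norm_sub_le_max_of_ultrametric _ _).trans (max_le hxi (hyle _ (hσm 0))))
    have hcl' := isOpen_ne.inter_closure ⟨inv_ne_zero hx0, hcl⟩
    have h := (continuousAt_inv₀ (inv_ne_zero hx0)).continuousWithinAt.mem_closure_image hcl'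
    rw [inv_inv] at h
    refine closure_mono ?_ h
    rintro _ ⟨_, ⟨h0, m, rfl⟩, rfl⟩
    exact ⟨σ + l * m, fun h => h0 (by simp [h]), inv_div _ _⟩
  · intro i hi j hj hij
    obtain ⟨hil, hiσ⟩ := hmodlt i hi
    obtain ⟨hjl, hjσ⟩ := hmodlt j hj
    refine Set.disjoint_left.2 fun x hxi hxj => ?_
    have h1 := hdist i j hiσ hjσ
    rw [hne (by rwa [Nat.mod_eq_of_lt hil, Nat.mod_eq_of_lt hjl]), mul_one] at h1
    have h2 := norm_sub_le_max_of_ultrametric (x - a (j + 1) / a j) (x - a (i + 1) / a i)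
    rw [sub_sub_sub_cancel_left, h1] at h2
    exact absurd (h2.trans (max_le hxj hxi)) (not_le.2 hpowlt)
  · intro i hi
    obtain ⟨_, hiσ⟩ := hmodlt i hi
    refine Set.disjoint_left.2 fun x hxi hxo => ?_
    have h2 := IsUltrametricDist.norm_add_le_max (x - a (i + 1) / a i) (a (i + 1) / a i)
    rw [sub_add_cancel] at h2
    have h3 := h2.trans (max_le (le_trans hxi hpowlt.le) (hxle i hiσ))
    refine absurd ((Set.mem_ofPred_eq ▸ hxo).trans_le h3) (not_lt.2 ?_)
    exact zpow_le_zpow_right₀ hpR.le (by omega)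
end

section
/- Let L(a,b) be a Lucas sequence of the first kind with characteristic roots λ_1, λ_2, and let p ≥ 3 be a prime. Suppose that ℚ_p(√D) is an unramified quadratic extension of ℚ_p (where D = a² + 4b), that the rank of appearance satisfies α_L(p) = p + 1, and that ν_p((λ_2/λ_1)^{α_L(p)} − 1) = 1. Then the Kepler set of (L_n) is the whole p-adic field: K((L_n)) = ℚ_p. -/
/-- The Lucas sequence of the first kind `L(a,b)`:
`L 0 = 0`, `L 1 = 1`, `L n = a L (n-1) + b L (n-2)`. -/
def lucasSeq (a b : ℤ) : ℕ → ℤ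
  | 0 => 0
  | 1 => 1
  | n + 2 => a * lucasSeq a b (n + 1) + b * lucasSeq a b n

lemma lucasSeq_mul_sub (a b : ℤ) (n d : ℕ) :
    lucasSeq a b (n + 1) * lucasSeq a b (n + d) - lucasSeq a b (n + d + 1) * lucasSeq a b n =
      (-b) ^ n * lucasSeq a b d := by
  induction n with
  | zero => simp [lucasSeq]
  | succ n ih =>
    rw [show n + 1 + d = n + d + 1 by ring, show n + d + 1 + 1 = (n + d) + 2 by ring,
      show n + 1 + 1 = n + 2 by ring, lucasSeq, lucasSeq, pow_succ]
    linear_combination (-b) * ih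

lemma lucasSeq_mul_roots_sub {K : Type*} [CommRing K] (a b : ℤ) (x y : K) (hsum : x + y = a)
    (hprod : x * y = -b) (n : ℕ) : (lucasSeq a b n : K) * (x - y) = x ^ n - y ^ n := by
  induction n using Nat.strong_induction_on with
  | _ n ih =>
    match n with
    | 0 => simp [lucasSeq]
    | 1 => simp [lucasSeq]
    | n + 2 =>
      have h0 := ih n (by omega)
      have h1 := ih (n + 1) (by omega)
      simp only [lucasSeq]
      push_cast
      have hb : (b : K) = -(x * y) := by rw [hprod]; ring
      rw [← hsum, hb]
      linear_combination (x + y) * h1 - x * y * h0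

lemma dvd_lucasSeq_succ_sub_pow {a b c : ℤ} (h : c ∣ b) (n : ℕ) :
    c ∣ lucasSeq a b (n + 1) - a ^ n := by
  induction n with
  | zero => simp [lucasSeq]
  | succ n ih =>
    rw [show lucasSeq a b (n + 1 + 1) - a ^ (n + 1) =
      a * (lucasSeq a b (n + 1) - a ^ n) + b * lucasSeq a b n by rw [lucasSeq]; ring]
    exact dvd_add (ih.mul_left a) (h.mul_right _)

/-- If the terms of `L(a,b)` have the largest possible period modulo each power of `p`, then
their ratios represent every residue class. -/
lemma exists_lucasSeq_ratio_modEq {p : ℕ} (hp : p.Prime) {a b : ℤ} (hb : ¬ (p : ℤ) ∣ b)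
    (hdvd : ∀ k m : ℕ, (p : ℤ) ^ (k + 1) ∣ lucasSeq a b m → p ^ k * (p + 1) ∣ m)
    (k : ℕ) (z : ℤ) :
    ∃ n : ℕ, ¬ (p : ℤ) ∣ lucasSeq a b n ∧
      (p : ℤ) ^ (k + 1) ∣ lucasSeq a b (n + 1) - z * lucasSeq a b n := by
  have hpZ : Prime (p : ℤ) := Nat.prime_iff_prime_int.mp hp
  set N := p ^ (k + 1) with hN
  have : NeZero N := ⟨(pow_pos hp.pos _).ne'⟩
  set idx : Fin (p ^ k) × Fin p → ℕ := fun s => (p + 1) * s.1 + s.2 + 1 with hidx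
  have hndvd : ∀ s, ¬ (p : ℤ) ∣ lucasSeq a b (idx s) := by
    intro s h
    have h1 := hdvd 0 (idx s) (by simpa using h)
    rw [pow_zero, one_mul, hidx] at h1
    simp only [add_assoc] at h1
    rw [Nat.dvd_add_right (dvd_mul_right _ _)] at h1
    have := Nat.le_of_dvd (by omega) h1
    have := s.2.2
    omega
  have hunit : ∀ s, IsUnit ((lucasSeq a b (idx s) : ℤ) : ZMod N) := by
    intro s
    rw [ZMod.coe_int_isUnit_iff_isCoprime, hN, Nat.cast_pow]
    exact ((hpZ.coprime_iff_not_dvd).2 (hndvd s)).pow_left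
  set f : Fin (p ^ k) × Fin p → ZMod N := fun s =>
    (lucasSeq a b (idx s + 1) : ZMod N) * (lucasSeq a b (idx s) : ZMod N)⁻¹ with hf
  have hfs : ∀ s, f s * (lucasSeq a b (idx s) : ZMod N) = lucasSeq a b (idx s + 1) := by
    intro s
    rw [hf]
    simp only
    rw [mul_assoc, ZMod.inv_mul_of_unit _ (hunit s), mul_one]
  have hidx_lt : ∀ s, idx s < p ^ k * (p + 1) := by
    intro s
    have h1 := s.1.2
    have h2 := s.2.2
    have h3 : (p + 1) * ((s.1 : ℕ) + 1) ≤ (p + 1) * p ^ k := Nat.mul_le_mul_left _ h1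
    simp only [hidx]
    rw [mul_comm (p ^ k)]
    linarith
  have hle : ∀ s t, f s = f t → idx s ≤ idx t → idx s = idx t := by
    intro s t hst hlt
    obtain ⟨d, hd⟩ := Nat.exists_eq_add_of_le hlt
    have hz : ((lucasSeq a b (idx s + 1) * lucasSeq a b (idx t)
        - lucasSeq a b (idx t + 1) * lucasSeq a b (idx s) : ℤ) : ZMod N) = 0 := by
      push_cast
      rw [← hfs, ← hfs, hst]
      ring
    rw [hd, lucasSeq_mul_sub, ZMod.intCast_zmod_eq_zero_iff_dvd, hN, Nat.cast_pow] at hz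
    have hc : IsCoprime ((p : ℤ) ^ (k + 1)) ((-b) ^ idx s) :=
      (((hpZ.coprime_iff_not_dvd).2 (by rwa [dvd_neg])).pow)
    have h1 := hdvd k d (hc.dvd_of_dvd_mul_left hz)
    have h2 := Nat.eq_zero_of_dvd_of_lt h1 (by have := hidx_lt t; omega)
    omega
  have hinj : Function.Injective f := by
    intro s t hst
    have h : idx s = idx t := by
      rcases le_total (idx s) (idx t) with h | h
      · exact hle s t hst h
      · exact (hle t s hst.symm h).symm
    have hmod : ∀ s : Fin (p ^ k) × Fin p, (idx s - 1) % (p + 1) = s.2 := by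
      intro s
      simp only [hidx, Nat.add_sub_cancel]
      rw [Nat.mul_add_mod, Nat.mod_eq_of_lt (by have := s.2.2; omega)]
    have h2 : (s.2 : ℕ) = t.2 := by rw [← hmod s, ← hmod t, h]
    have h1 : (s.1 : ℕ) = t.1 := by
      simp only [hidx] at h
      exact Nat.eq_of_mul_eq_mul_left (Nat.succ_pos p) (by simp only [Nat.succ_eq_add_one]; omega)
    exact Prod.ext (Fin.ext h1) (Fin.ext h2)
  have hbij : Function.Bijective f := by
    rw [Fintype.bijective_iff_injective_and_card]
    refine ⟨hinj, ?_⟩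
    simp [ZMod.card, hN, pow_succ]
  obtain ⟨s, hs⟩ := hbij.2 (z : ZMod N)
  refine ⟨idx s, hndvd s, ?_⟩
  rw [← Nat.cast_pow, ← hN, ← ZMod.intCast_zmod_eq_zero_iff_dvd]
  push_cast
  rw [← hfs, hs, sub_self]

lemma mem_keplerSet_of_norm_le_one {p : ℕ} [Fact p.Prime] {a b : ℤ}
    (h : ∀ (k : ℕ) (z : ℤ), ∃ n : ℕ, ¬ (p : ℤ) ∣ lucasSeq a b n ∧
      (p : ℤ) ^ (k + 1) ∣ lucasSeq a b (n + 1) - z * lucasSeq a b n)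
    {x : ℚ_[p]} (hx : ‖x‖ ≤ 1) : x ∈ keplerSet p (fun n => (lucasSeq a b n : ℚ_[p])) := by
  refine Metric.mem_closure_iff.2 fun ε hε => ?_
  obtain ⟨x, rfl⟩ : ∃ y : ℤ_[p], (y : ℚ_[p]) = x := ⟨⟨x, hx⟩, rfl⟩
  obtain ⟨z, hz⟩ := PadicInt.denseRange_intCast.exists_dist_lt x hε
  have hz' : dist (x : ℚ_[p]) z < ε := by
    rw [dist_eq_norm, PadicInt.norm_def] at hz
    simpa [dist_eq_norm] using hz
  obtain ⟨k, hk⟩ := exists_pow_lt_of_lt_one hε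
    (inv_lt_one_of_one_lt₀ (by exact_mod_cast (Fact.out : p.Prime).one_lt) : (p : ℝ)⁻¹ < 1)
  obtain ⟨n, hn, hdvd⟩ := h k z
  have hn1 : ‖(lucasSeq a b n : ℚ_[p])‖ = 1 :=
    le_antisymm (Padic.norm_int_le_one _)
      (not_lt.1 fun hlt => hn ((Padic.norm_intCast_lt_one_iff).1 hlt))
  have hn0 : (lucasSeq a b n : ℚ_[p]) ≠ 0 := norm_ne_zero_iff.1 (by rw [hn1]; exact one_ne_zero)
  refine ⟨_, ⟨n, hn0, rfl⟩, ?_⟩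
  have hnorm : dist (z : ℚ_[p]) ((lucasSeq a b (n + 1) : ℚ_[p]) / lucasSeq a b n) < ε := by
    have h1 := (Padic.norm_int_le_pow_iff_dvd
      (lucasSeq a b (n + 1) - z * lucasSeq a b n) (k + 1)).2 (by exact_mod_cast hdvd)
    rw [dist_comm, dist_eq_norm, show (lucasSeq a b (n + 1) : ℚ_[p]) / lucasSeq a b n - z =
      ((lucasSeq a b (n + 1) - z * lucasSeq a b n : ℤ) : ℚ_[p]) / lucasSeq a b n by
        push_cast; field_simp, norm_div, hn1, div_one]
    refine lt_of_le_of_lt h1 (lt_of_le_of_lt ?_ hk)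
    rw [zpow_neg, zpow_natCast, ← inv_pow]
    exact pow_le_pow_of_le_one (by positivity)
      (inv_le_one_of_one_le₀ (by exact_mod_cast (Fact.out : p.Prime).one_lt.le)) (by omega)
  exact lt_of_le_of_lt (dist_triangle_max _ (z : ℚ_[p]) _) (max_lt hz' hnorm)

/-- Shifting the index acts on ratios by `x ↦ a + b / x`, which moves the ratios of norm at
least one into the unit ball. -/
lemma keplerSet_lucasSeq_eq_univ {p : ℕ} [Fact p.Prime] {a b : ℤ} (hb : b ≠ 0)
    (h : ∀ x : ℚ_[p], ‖x‖ ≤ 1 → x ∈ keplerSet p (fun n => (lucasSeq a b n : ℚ_[p]))) :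
    keplerSet p (fun n => (lucasSeq a b n : ℚ_[p])) = Set.univ := by
  refine Set.eq_univ_of_forall fun x => ?_
  rcases le_or_gt ‖x‖ 1 with hx | hx
  · exact h x hx
  have hx0 : x ≠ 0 := norm_pos_iff.1 (zero_lt_one.trans hx)
  have hbQ : (b : ℚ_[p]) ≠ 0 := by exact_mod_cast hb
  have hy : ‖(a : ℚ_[p]) + b / x‖ ≤ 1 := by
    refine (Padic.nonarchimedean _ _).trans (max_le (Padic.norm_int_le_one _) ?_)
    rw [norm_div]
    exact div_le_one_of_le₀ ((Padic.norm_int_le_one _).trans hx.le) (norm_nonneg _)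
  have hcont : ContinuousAt (fun y : ℚ_[p] => b / (y - a)) ((a : ℚ_[p]) + b / x) := by
    refine ContinuousAt.div (f := fun _ => (b : ℚ_[p])) (g := fun y => y - (a : ℚ_[p]))
      (by fun_prop) (by fun_prop) ?_
    rw [add_sub_cancel_left]
    exact div_ne_zero hbQ hx0
  have hval : (fun y : ℚ_[p] => b / (y - a)) ((a : ℚ_[p]) + b / x) = x := by
    simp only [add_sub_cancel_left]
    field_simp
  have hne : {y : ℚ_[p] | y ≠ a} ∈ nhds ((a : ℚ_[p]) + b / x) :=
    isOpen_ne.mem_nhds (by simpa using ⟨hb, hx0⟩)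
  rw [keplerSet, mem_closure_iff_nhds]
  intro t ht
  rw [← hval] at ht
  obtain ⟨y, ⟨hyt, hya⟩, n, hn, rfl⟩ :=
    mem_closure_iff_nhds.1 (h _ hy) _ (Filter.inter_mem (hcont ht) hne)
  obtain _ | n := n
  · simp [lucasSeq] at hn
  have hrec : (lucasSeq a b (n + 1 + 1) : ℚ_[p]) =
      a * lucasSeq a b (n + 1) + b * lucasSeq a b n := by
    rw [lucasSeq]; push_cast; ring
  simp only [Set.mem_ofPred_eq, hrec] at hya
  have hn' : (lucasSeq a b n : ℚ_[p]) ≠ 0 := by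
    intro h0
    apply hya
    rw [h0]
    field_simp
    ring
  refine ⟨_, hyt, n, hn', ?_⟩
  simp only [hrec]
  field_simp
  ring

section Ultrametric

variable {K : Type*} [NormedField K] [IsUltrametricDist K]

lemma norm_eq_of_norm_sub_lt_norm {x y : K} (h : ‖x - y‖ < ‖y‖) : ‖x‖ = ‖y‖ := by
  have := IsUltrametricDist.norm_eq_of_add_norm_lt_max (x := x) (y := -y)
    (by rw [← sub_eq_add_neg, norm_neg]; exact h.trans_le (le_max_right _ _))
  rwa [norm_neg] at this

lemma norm_aeval_intPolynomial_le_one (Q : Polynomial ℤ) {c : K} (hc : ‖c‖ ≤ 1) :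
    ‖Polynomial.aeval c Q‖ ≤ 1 := by
  rw [Polynomial.aeval_eq_sum_range]
  refine IsUltrametricDist.norm_sum_le_of_forall_le_of_nonneg zero_le_one fun i _ => ?_
  rw [zsmul_eq_mul, norm_mul, norm_pow]
  exact mul_le_one₀ (IsUltrametricDist.norm_intCast_le_one K _) (by positivity)
    (pow_le_one₀ (norm_nonneg _) hc)

lemma norm_pow_sub_one_le {u : K} (hu : ‖u‖ ≤ 1) (n : ℕ) : ‖u ^ n - 1‖ ≤ ‖u - 1‖ := by
  rw [← geom_sum_mul, norm_mul]
  refine mul_le_of_le_one_left (norm_nonneg _) ?_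
  refine IsUltrametricDist.norm_sum_le_of_forall_le_of_nonneg zero_le_one fun i _ => ?_
  rw [norm_pow]
  exact pow_le_one₀ (norm_nonneg _) hu

lemma norm_geom_sum_eq_of_odd {p : ℕ} (hodd : Odd p) (hp0 : (p : K) ≠ 0) (hp1 : ‖(p : K)‖ < 1)
    {u : K} (hu : ‖u - 1‖ ≤ ‖(p : K)‖) : ‖∑ i ∈ Finset.range p, u ^ i‖ = ‖(p : K)‖ := by
  have hpos := norm_pos_iff.2 hp0
  obtain ⟨Q, hQ⟩ := odd_sq_dvd_geom_sum₂_sub (1 : Polynomial ℤ) Polynomial.X hodd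
  set c := (u - 1) / p with hc
  have huc : u = 1 + p * c := by rw [hc]; field_simp; ring
  have hc1 : ‖c‖ ≤ 1 := by
    rw [hc, norm_div]
    exact div_le_one_of_le₀ hu hpos.le
  have h := congrArg (Polynomial.aeval c) hQ
  simp only [one_pow, mul_one, map_sub, map_sum, map_pow, map_add, map_one, map_mul,
    map_natCast, Polynomial.aeval_X, ← huc] at h
  apply norm_eq_of_norm_sub_lt_norm
  rw [h, norm_mul, norm_pow]
  calc ‖(p : K)‖ ^ 2 * _ ≤ ‖(p : K)‖ ^ 2 :=
        mul_le_of_le_one_right (by positivity) (norm_aeval_intPolynomial_le_one Q hc1)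
    _ < ‖(p : K)‖ := by nlinarith

lemma norm_geom_sum_eq_one {u : K} {q : ℕ} (hq : ‖(q : K)‖ = 1) (hu : ‖u - 1‖ < 1) :
    ‖∑ i ∈ Finset.range q, u ^ i‖ = 1 := by
  have hu1 : ‖u‖ = 1 := by
    simpa using norm_eq_of_norm_sub_lt_norm (x := u) (y := 1) (by simpa using hu)
  rw [← hq]
  apply norm_eq_of_norm_sub_lt_norm
  rw [hq, show (∑ i ∈ Finset.range q, u ^ i) - (q : K) = ∑ i ∈ Finset.range q, (u ^ i - 1) by
    simp]
  exact (IsUltrametricDist.norm_sum_le_of_forall_le_of_nonneg (norm_nonneg (u - 1))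
    fun i _ => norm_pow_sub_one_le hu1.le i).trans_lt hu

/-- Lifting the exponent, for the norm of an ultrametric field. -/
lemma norm_pow_sub_one_eq_s9 {p : ℕ} (hodd : Odd p) (hp0 : (p : K) ≠ 0) (hp1 : ‖(p : K)‖ < 1)
    (hunit : ∀ q : ℕ, q.Prime → q ≠ p → ‖(q : K)‖ = 1) (n : ℕ) {u : K}
    (hu : ‖u - 1‖ ≤ ‖(p : K)‖) : ‖u ^ n - 1‖ = ‖(n : K)‖ * ‖u - 1‖ := by
  induction n using induction_on_primes generalizing u with
  | zero => simp
  | one => simp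
  | prime_mul q n hq ih =>
    have hu1 : ‖u‖ = 1 := by
      simpa using norm_eq_of_norm_sub_lt_norm (x := u) (y := 1) (by simpa using hu.trans_lt hp1)
    have hstep : ‖u ^ q - 1‖ = ‖(q : K)‖ * ‖u - 1‖ := by
      rw [← geom_sum_mul, norm_mul]
      by_cases hqp : q = p
      · subst hqp
        rw [norm_geom_sum_eq_of_odd hodd hp0 hp1 hu]
      · rw [hunit q hq hqp, norm_geom_sum_eq_one (hunit q hq hqp) (hu.trans_lt hp1)]
    rw [pow_mul, ih ((norm_pow_sub_one_le hu1.le q).trans hu), hstep, Nat.cast_mul, norm_mul]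
    ring

lemma norm_lt_one_of_mul_sub_eq_pow_sub_pow {p : ℕ} (hp0 : ‖(p : K)‖ < 1) {x y L : K}
    (hx : ‖x‖ ≤ 1) (hy : ‖y‖ ≤ 1) (hne : x ≠ y) (hxy : ‖x - y‖ < 1)
    (hL : L * (x - y) = x ^ p - y ^ p) : ‖L‖ < 1 := by
  have hdiff : ∀ i : ℕ, ‖x ^ i - y ^ i‖ ≤ ‖x - y‖ := fun i => by
    rw [← Commute.geom_sum₂_mul (Commute.all x y), norm_mul]
    refine mul_le_of_le_one_left (norm_nonneg _) ?_
    refine IsUltrametricDist.norm_sum_le_of_forall_le_of_nonneg zero_le_one fun j _ => ?_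
    rw [norm_mul, norm_pow, norm_pow]
    exact mul_le_one₀ (pow_le_one₀ (norm_nonneg _) hx) (by positivity)
      (pow_le_one₀ (norm_nonneg _) hy)
  have hsum : L = ∑ i ∈ Finset.range p, (x ^ i - y ^ i) * y ^ (p - 1 - i) + p * y ^ (p - 1) := by
    have h1 : L = ∑ i ∈ Finset.range p, x ^ i * y ^ (p - 1 - i) :=
      mul_right_cancel₀ (sub_ne_zero.2 hne) (by rw [hL, Commute.geom_sum₂_mul (Commute.all x y)])
    have h2 : ∑ i ∈ Finset.range p, y ^ i * y ^ (p - 1 - i) = p * y ^ (p - 1) := by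
      rw [Finset.sum_congr rfl (g := fun _ => y ^ (p - 1)) fun i hi => by
        rw [← pow_add]; congr 1; have := Finset.mem_range.1 hi; omega]
      simp
    rw [h1, ← h2, ← Finset.sum_add_distrib]
    exact Finset.sum_congr rfl fun i _ => by ring
  rw [hsum]
  refine (IsUltrametricDist.norm_add_le_max _ _).trans_lt (max_lt ?_ ?_)
  · refine (IsUltrametricDist.norm_sum_le_of_forall_le_of_nonneg (norm_nonneg (x - y))
      fun i _ => ?_).trans_lt hxy
    rw [norm_mul, norm_pow]
    exact (mul_le_of_le_one_right (norm_nonneg _) (pow_le_one₀ (norm_nonneg _) hy)).trans (hdiff i)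
  · rw [norm_mul, norm_pow]
    exact mul_lt_one_of_nonneg_of_lt_one_left (norm_nonneg _) hp0 (pow_le_one₀ (norm_nonneg _) hy)

end Ultrametric

theorem stmt_9 (p : ℕ) [Fact p.Prime] (hp : 3 ≤ p)
    (a b : ℤ) (ha : a ≠ 0) (hb : b ≠ 0)
    -- `K = ℚ_p(√D)` is the unramified quadratic extension of `ℚ_p`, `D = a² + 4b`:
    -- a nonarchimedean normed field extension of `ℚ_p` with norms integer powers
    -- of `p`, spanned by `1` and a square root `δ ∉ ℚ_p` of `D`
    (K : Type) [NormedField K] [Algebra ℚ_[p] K]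
    (hiso : ∀ x : ℚ_[p], ‖algebraMap ℚ_[p] K x‖ = ‖x‖)
    (hna : ∀ x y : K, ‖x + y‖ ≤ max ‖x‖ ‖y‖)
    (hval : ∀ x : K, x ≠ 0 → ∃ m : ℤ, ‖x‖ = (p : ℝ) ^ (-m))
    (δ : K) (hδ : δ ^ 2 = algebraMap ℚ_[p] K ((a ^ 2 + 4 * b : ℤ) : ℚ_[p]))
    (hδQ : δ ∉ Set.range (algebraMap ℚ_[p] K))
    (hspan : ∀ x : K, ∃ u v : ℚ_[p], x = algebraMap ℚ_[p] K u + algebraMap ℚ_[p] K v * δ)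
    -- the characteristic roots `λ₁ = (a + √D)/2`, `λ₂ = (a - √D)/2`
    (lam₁ lam₂ : K)
    (hlam₁ : lam₁ = (algebraMap ℚ_[p] K (a : ℚ_[p]) + δ) / 2)
    (hlam₂ : lam₂ = (algebraMap ℚ_[p] K (a : ℚ_[p]) - δ) / 2)
    -- `α` is the rank of appearance of `p` in `L(a,b)`, and `α = p + 1`
    (α : ℕ) (hα0 : 0 < α) (hαdvd : (p : ℤ) ∣ lucasSeq a b α)
    (hαmin : ∀ m : ℕ, 0 < m → (p : ℤ) ∣ lucasSeq a b m → α ≤ m)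
    (hα : α = p + 1)
    -- `ν_p((λ₂/λ₁) ^ α - 1) = 1`
    (hν : ‖(lam₂ / lam₁) ^ α - 1‖ = (p : ℝ)⁻¹) :
    keplerSet p (fun n => (lucasSeq a b n : ℚ_[p])) = Set.univ := by
  subst hα
  have hpp : p.Prime := Fact.out
  have hp2 : p ≠ 2 := by omega
  have : IsUltrametricDist K :=
    IsUltrametricDist.isUltrametricDist_of_forall_norm_add_le_max_norm hna
  have hinv1 : (p : ℝ)⁻¹ < 1 := inv_lt_one_of_one_lt₀ (by exact_mod_cast hpp.one_lt)
  have hint : ∀ z : ℤ, ‖(z : K)‖ = ‖(z : ℚ_[p])‖ := fun z => by rw [← hiso, map_intCast]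
  have hnat : ∀ n : ℕ, ‖(n : K)‖ = ‖(n : ℚ_[p])‖ := fun n => by rw [← hiso, map_natCast]
  have hlt : ∀ z : ℤ, ‖(z : K)‖ < 1 ↔ (p : ℤ) ∣ z := fun z => by
    rw [hint, Padic.norm_intCast_lt_one_iff]
  have hone : ∀ z : ℤ, ¬ (p : ℤ) ∣ z → ‖(z : K)‖ = 1 := fun z hz =>
    le_antisymm (IsUltrametricDist.norm_intCast_le_one K z) (not_lt.1 fun h => hz ((hlt z).1 h))
  have hunit : ∀ q : ℕ, q.Prime → q ≠ p → ‖(q : K)‖ = 1 := fun q hq hqp => by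
    have := hone q fun h => hqp
      (((Nat.prime_dvd_prime_iff_eq hpp hq).1 (Int.natCast_dvd_natCast.1 h)).symm)
    simpa using this
  have hpn : ‖(p : K)‖ = (p : ℝ)⁻¹ := by rw [hnat, Padic.norm_p]
  have hp0 : (p : K) ≠ 0 := norm_pos_iff.1 (by rw [hpn]; exact inv_pos.2 (by exact_mod_cast hpp.pos))
  have h2n : ‖(2 : K)‖ = 1 := by exact_mod_cast hunit 2 Nat.prime_two hp2.symm
  have h20 : (2 : K) ≠ 0 := norm_ne_zero_iff.1 (by rw [h2n]; exact one_ne_zero)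
  rw [map_intCast] at hlam₁ hlam₂ hδ
  have hsum : lam₁ + lam₂ = a := by rw [hlam₁, hlam₂]; field_simp; ring
  have hsub : lam₁ - lam₂ = δ := by rw [hlam₁, hlam₂]; field_simp; ring
  have hprod : lam₁ * lam₂ = -b := by
    rw [hlam₁, hlam₂]
    push_cast at hδ
    field_simp
    linear_combination -hδ
  have hδ0 : δ ≠ 0 := fun h => hδQ ⟨0, by rw [map_zero, h]⟩
  have hbinet := lucasSeq_mul_roots_sub a b lam₁ lam₂ hsum hprod
  have hpb : ¬ (p : ℤ) ∣ b := fun hdvd => by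
    have h1 := (dvd_sub_right hαdvd).1 (dvd_lucasSeq_succ_sub_pow (a := a) hdvd p)
    have h2 := (Nat.prime_iff_prime_int.1 hpp).dvd_of_dvd_pow h1
    have := hαmin 2 two_pos (by simpa [lucasSeq] using h2)
    omega
  have hδle : ‖δ‖ ≤ 1 := by
    have h1 : ‖δ‖ ^ 2 ≤ 1 := by
      rw [← norm_pow, hδ]
      exact IsUltrametricDist.norm_intCast_le_one K _
    exact (pow_le_one_iff_of_nonneg (norm_nonneg _) two_ne_zero).1 h1
  have hale := IsUltrametricDist.norm_intCast_le_one K a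
  have h1le : ‖lam₁‖ ≤ 1 := by
    rw [hlam₁, norm_div, h2n, div_one]
    exact (hna _ _).trans (max_le hale hδle)
  have h2le : ‖lam₂‖ ≤ 1 := by
    rw [hlam₂, norm_div, h2n, div_one, sub_eq_add_neg]
    exact (hna _ _).trans (max_le hale (by rwa [norm_neg]))
  have hmul : ‖lam₁‖ * ‖lam₂‖ = 1 := by rw [← norm_mul, hprod, norm_neg, hone b hpb]
  have h1n : ‖lam₁‖ = 1 := by nlinarith [norm_nonneg lam₁, norm_nonneg lam₂]
  have h2n' : ‖lam₂‖ = 1 := by nlinarith [norm_nonneg lam₁, norm_nonneg lam₂]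
  have h10 : lam₁ ≠ 0 := norm_ne_zero_iff.1 (by rw [h1n]; exact one_ne_zero)
  have hδn : ‖δ‖ = 1 := by
    refine le_antisymm hδle (not_lt.1 fun h => ?_)
    have hL : ‖(lucasSeq a b p : K)‖ < 1 :=
      norm_lt_one_of_mul_sub_eq_pow_sub_pow (by rw [hpn]; exact hinv1) h1le h2le
        (sub_ne_zero.1 (by rwa [hsub])) (by rwa [hsub]) (hbinet p)
    have := hαmin p hpp.pos ((hlt _).1 hL)
    omega
  set ω := lam₂ / lam₁ with hω
  have hωn : ‖ω‖ = 1 := by rw [hω, norm_div, h1n, h2n', div_one]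
  have hLω : ∀ n, ‖(lucasSeq a b n : K)‖ = ‖ω ^ n - 1‖ := fun n => by
    have h := congrArg norm (hbinet n)
    rw [hsub, norm_mul, hδn, mul_one] at h
    rw [h, hω, div_pow, div_sub_one (pow_ne_zero n h10), norm_div, norm_pow, h1n, one_pow,
      div_one, norm_sub_rev]
  refine keplerSet_lucasSeq_eq_univ hb fun x hx => mem_keplerSet_of_norm_le_one
    (exists_lucasSeq_ratio_modEq hpp hpb fun k m hkm => ?_) hx
  have hαm : p + 1 ∣ m := by
    rw [Nat.dvd_iff_mod_eq_zero]
    by_contra hr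
    have hm1 : ‖ω ^ m - 1‖ < 1 := by
      rw [← hLω, hlt]
      exact (dvd_pow_self _ k.succ_ne_zero).trans hkm
    have hq : ‖ω ^ ((p + 1) * (m / (p + 1))) - 1‖ < 1 := by
      rw [pow_mul]
      refine (norm_pow_sub_one_le (by rw [norm_pow, hωn, one_pow]) _).trans_lt ?_
      rw [hν]
      exact hinv1
    have hrm : ‖ω ^ (m % (p + 1)) - 1‖ < 1 := by
      have hfac : ω ^ m - 1 - (ω ^ ((p + 1) * (m / (p + 1))) - 1) =
          ω ^ ((p + 1) * (m / (p + 1))) * (ω ^ (m % (p + 1)) - 1) := by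
        rw [mul_sub, ← pow_add, Nat.div_add_mod]
        ring
      have := congrArg norm hfac
      rw [norm_mul, norm_pow, hωn, one_pow, one_mul] at this
      rw [← this, sub_eq_add_neg]
      exact (hna _ _).trans_lt (max_lt hm1 (by rwa [norm_neg]))
    have := hαmin _ (Nat.pos_of_ne_zero hr) ((hlt _).1 (by rw [hLω]; exact hrm))
    have := Nat.mod_lt m (show 0 < p + 1 by omega)
    omega
  obtain ⟨j, rfl⟩ := hαm
  rw [mul_comm]
  refine mul_dvd_mul_left _ ?_
  have hkm' := (Padic.norm_int_le_pow_iff_dvd _ (k + 1)).2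
    (by exact_mod_cast hkm : ((p ^ (k + 1) : ℕ) : ℤ) ∣ lucasSeq a b ((p + 1) * j))
  rw [← hint, hLω, pow_mul, norm_pow_sub_one_eq_s9 (hpp.odd_of_ne_two hp2) hp0
    (by rw [hpn]; exact hinv1) hunit j (by rw [hν, hpn]), hν, hnat] at hkm'
  have hj : ‖((j : ℤ) : ℚ_[p])‖ ≤ (p : ℝ) ^ (-k : ℤ) := by
    have hpos : (0 : ℝ) < p := by exact_mod_cast hpp.pos
    rw [Int.cast_natCast]
    refine le_of_mul_le_mul_right (hkm'.trans_eq ?_) (inv_pos.2 hpos)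
    rw [← zpow_neg_one, ← zpow_add₀ hpos.ne']
    congr 1
    push_cast
    ring
  exact_mod_cast (Padic.norm_int_le_pow_iff_dvd _ k).1 hj
end
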